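/- arXiv:1804.03654 — 2 statements merged into one kernel-verified Lean document; each statement's English description precedes it below -/
import Mathlib

section
/- (Turán's power sum inequality.) Let ν ≥ 1 and let z₁,…,z_ν ∈ ℂ. If K is an integer with K ≥ ν, then there exists an integer k with K ≤ k ≤ 2K such that |z₁^k + z₂^k + ⋯ + z_ν^k| ≥ (|z₁|/50)^k. -/
open Polynomial Complex in
theorem turan_aux_radius (n : ℕ) (hn : 1 ≤ n) (t : Fin n → ℝ) :
    ∃ r : ℝ, 1 / 2 ≤ r ∧ r ≤ 1 ∧ (1 / 8 : ℝ) ^ n ≤ ∏ j, |r - t j| := by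
  by_contra! h
  set Q : ℝ[X] := ∏ j : Fin n, (X + C (3 - 4 * t j)) with hQ
  have hQm : Q.Monic := monic_prod_of_monic _ _ (fun j _ => monic_X_add_C _)
  have hQd : Q.natDegree = n := by
    rw [hQ, natDegree_prod_of_monic _ _ (fun j _ => monic_X_add_C _)]
    simp only [natDegree_X_add_C]
    simp
  have hev : ∀ x ∈ Set.Icc (-1 : ℝ) 1, |(C ((2 : ℝ) ^ n) * Q).eval x| ≤ 1 := by
    intro x hx
    have h1 := h ((x + 3) / 4) (by linarith [hx.1]) (by linarith [hx.2])
    have h2 : |(C ((2 : ℝ) ^ n) * Q).eval x| = 8 ^ n * ∏ j, |(x + 3) / 4 - t j| := by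
      rw [hQ, eval_mul, eval_C, eval_prod, abs_mul, Finset.abs_prod, abs_of_pos (by positivity)]
      have : ∀ j : Fin n, |eval x (X + C (3 - 4 * t j))| = 4 * |(x + 3) / 4 - t j| := by
        intro j
        rw [eval_add, eval_X, eval_C, ← abs_of_pos (by norm_num : (0 : ℝ) < 4), ← abs_mul,
          abs_of_pos (by norm_num : (0 : ℝ) < 4)]
        congr 1
        ring
      rw [Finset.prod_congr rfl (fun j _ => this j), Finset.prod_mul_distrib]
      simp only [Finset.prod_const, Finset.card_univ, Fintype.card_fin]
      rw [← mul_assoc, ← mul_pow]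
      norm_num
    rw [h2]
    calc (8 : ℝ) ^ n * ∏ j, |(x + 3) / 4 - t j| ≤ 8 ^ n * (1 / 8) ^ n := by gcongr
      _ = 1 := by rw [← mul_pow]; norm_num
  have hdeg : (C ((2 : ℝ) ^ n) * Q).degree ≤ n := by
    rw [degree_C_mul (by positivity)]
    exact hQd ▸ degree_le_natDegree
  have h3 := Polynomial.Chebyshev.coeff_le_of_forall_abs_le_one hdeg hev
  have hc : Q.coeff n = 1 := by
    have := hQm.coeff_natDegree
    rwa [hQd] at this
  rw [coeff_C_mul, hc, mul_one] at h3
  have : (2 : ℝ) ^ (n - 1) < 2 ^ n := pow_lt_pow_right₀ (by norm_num) (by omega)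
  linarith

open Complex Real in
theorem turan_aux_integral (z : ℂ) (r : ℝ) (hr : 0 < r) (hz : ‖z‖ ≠ r) (K : ℕ) (hK : 1 ≤ K) :
    (∮ w in C(0, r), z ^ K / (w ^ K * (w - z))) = if r < ‖z‖ then -(2 * π * I) else 0 := by
  have hw0 : ∀ w ∈ Metric.sphere (0 : ℂ) r, w ≠ 0 := by
    intro w hw h
    simp [h] at hw
    linarith
  have hwz : ∀ w ∈ Metric.sphere (0 : ℂ) r, w - z ≠ 0 := by
    intro w hw h
    rw [sub_eq_zero] at h
    subst h
    simp at hw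
    exact hz hw
  have h1 : (∮ w in C(0, r), z ^ K / (w ^ K * (w - z))) =
      ∮ w in C(0, r), ((w - z)⁻¹ - ∑ l ∈ Finset.range K, z ^ l * (w - 0) ^ (-(l : ℤ) - 1)) := by
    refine circleIntegral.integral_congr hr.le (fun w hw => ?_)
    have a := hw0 w hw
    have b := hwz w hw
    have hs : ∑ l ∈ Finset.range K, z ^ l * (w - 0) ^ (-(l : ℤ) - 1)
        = (w ^ K)⁻¹ * ∑ l ∈ Finset.range K, z ^ l * w ^ (K - 1 - l) := by
      rw [Finset.mul_sum]
      refine Finset.sum_congr rfl (fun l hl => ?_)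
      have hl := Finset.mem_range.1 hl
      have : w ^ K = w ^ (K - 1 - l) * w ^ (l + 1) := by
        rw [← pow_add]; congr 1; omega
      rw [this, sub_zero, show (-(l : ℤ) - 1) = -((l + 1 : ℕ) : ℤ) by push_cast; ring,
        zpow_neg, zpow_natCast]
      field_simp
    have hg := geom_sum₂_mul z w K
    have hg' : ∑ l ∈ Finset.range K, z ^ l * w ^ (K - 1 - l) = (w ^ K - z ^ K) / (w - z) := by
      rw [eq_div_iff b]
      linear_combination -hg
    simp only [hs, hg']
    field_simp
    ring
  have hi1 : CircleIntegrable (fun w => (w - z)⁻¹) 0 r :=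
    ContinuousOn.circleIntegrable hr.le
      (ContinuousOn.inv₀ (by fun_prop) hwz)
  have hi2 : ∀ l ∈ Finset.range K,
      CircleIntegrable (fun w : ℂ => z ^ l * (w - 0) ^ (-(l : ℤ) - 1)) 0 r := by
    intro l _
    refine ContinuousOn.circleIntegrable hr.le (ContinuousOn.mul continuousOn_const ?_)
    refine ContinuousOn.zpow₀ (by fun_prop) _ (fun w hw => Or.inl ?_)
    simpa using hw0 w hw
  have hi3 : CircleIntegrable
      (fun w : ℂ => ∑ l ∈ Finset.range K, z ^ l * (w - 0) ^ (-(l : ℤ) - 1)) 0 r :=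
    CircleIntegrable.fun_sum _ hi2
  rw [h1, circleIntegral.integral_sub hi1 hi3, circleIntegral.integral_fun_sum hi2]
  have h2 : ∑ l ∈ Finset.range K, (∮ w in C(0, r), z ^ l * (w - 0) ^ (-(l : ℤ) - 1))
      = 2 * π * I := by
    rw [Finset.sum_eq_single_of_mem 0 (by simp; omega)]
    · simp only [pow_zero, one_mul, Nat.cast_zero, neg_zero, zero_sub, zpow_neg_one]
      exact circleIntegral.integral_sub_center_inv 0 hr.ne'
    · intro l _ hl
      rw [circleIntegral.integral_const_mul, circleIntegral.integral_sub_zpow_of_ne (by omega),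
        mul_zero]
  rw [h2]
  split_ifs with hlt
  · have : (∮ w in C(0, r), (w - z)⁻¹) = 0 := by
      apply DiffContOnCl.circleIntegral_eq_zero hr.le
      apply DifferentiableOn.diffContOnCl
      rw [closure_ball _ hr.ne']
      apply DifferentiableOn.inv (by fun_prop)
      intro w hw h
      rw [sub_eq_zero] at h
      subst h
      simp at hw
      linarith
    rw [this]; ring
  · have : z ∈ Metric.ball (0 : ℂ) r := by
      simp
      exact lt_of_le_of_ne (not_lt.1 hlt) hz
    rw [circleIntegral.integral_sub_inv_of_mem_ball this]; ring

open Polynomial in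
theorem turan_aux_identity (n : ℕ) (z : Fin n → ℂ) (K : ℕ) (P : ℂ[X]) (hd : P.natDegree = n)
    (hP : ∀ j, P.eval (z j) = 0) (w : ℂ) (hw : ∀ j, w - z j ≠ 0) (hPw : P.eval w ≠ 0) :
    ∑ j, z j ^ K / (w - z j) = (∑ i ∈ Finset.range (n + 1), P.coeff i *
      ∑ l ∈ Finset.range i, w ^ l * ∑ j, z j ^ (K + (i - 1 - l))) / P.eval w := by
  have h : ∀ j, z j ^ K / (w - z j) = (∑ i ∈ Finset.range (n + 1), P.coeff i *
      ∑ l ∈ Finset.range i, w ^ l * z j ^ (K + (i - 1 - l))) / P.eval w := by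
    intro j
    rw [div_eq_div_iff (hw j) hPw]
    have e1 : P.eval w = P.eval w - P.eval (z j) := by rw [hP]; ring
    rw [e1, eval_eq_sum_range, eval_eq_sum_range, hd, ← Finset.sum_sub_distrib, Finset.mul_sum,
      Finset.sum_mul]
    refine Finset.sum_congr rfl (fun i _ => ?_)
    have hg := geom_sum₂_mul w (z j) i
    have : ∑ l ∈ Finset.range i, w ^ l * z j ^ (K + (i - 1 - l)) =
        z j ^ K * ∑ l ∈ Finset.range i, w ^ l * z j ^ (i - 1 - l) := by
      rw [Finset.mul_sum]
      refine Finset.sum_congr rfl (fun l _ => ?_)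
      rw [pow_add]; ring
    rw [this]
    linear_combination -(z j ^ K * P.coeff i) * hg
  rw [Finset.sum_congr rfl (fun j _ => h j), ← Finset.sum_div, Finset.sum_comm]
  congr 1
  refine Finset.sum_congr rfl (fun i _ => ?_)
  rw [← Finset.mul_sum, Finset.sum_comm]
  simp only [Finset.mul_sum]

open Polynomial Complex Real in
theorem turan_aux_normalized (n : ℕ) (hn : 1 ≤ n) (z : Fin n → ℂ) (K : ℕ) (hK : n ≤ K)
    (hz : ∀ j, ‖z j‖ ≤ 1) (j₀ : Fin n) (hj₀ : ‖z j₀‖ = 1) :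
    ∃ k : ℕ, K ≤ k ∧ k ≤ 2 * K ∧ (1 / 50 : ℝ) ^ k ≤ ‖∑ j, z j ^ k‖ := by
  by_contra! hcon
  obtain ⟨r, hr1, hr2, hprod⟩ := turan_aux_radius n hn (fun j => ‖z j‖)
  have hr : 0 < r := by linarith
  have hne : ∀ j, ‖z j‖ ≠ r := by
    intro j hj
    have : ∏ j, |r - ‖z j‖| = 0 := Finset.prod_eq_zero (Finset.mem_univ j) (by simp [hj])
    rw [this] at hprod
    have : (0 : ℝ) < (1 / 8) ^ n := by positivity
    linarith
  have hwne : ∀ w ∈ Metric.sphere (0 : ℂ) r, ∀ j, w - z j ≠ 0 := by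
    intro w hw j h
    rw [sub_eq_zero] at h
    subst h
    simp at hw
    exact hne j hw
  have hw0 : ∀ w ∈ Metric.sphere (0 : ℂ) r, w ≠ 0 := by
    intro w hw h
    simp [h] at hw
    linarith
  set P : ℂ[X] := ∏ j : Fin n, (X - C (z j)) with hPdef
  have hPm : P.Monic := monic_prod_of_monic _ _ (fun j _ => monic_X_sub_C _)
  have hPd : P.natDegree = n := by
    rw [hPdef, natDegree_prod_of_monic _ _ (fun j _ => monic_X_sub_C _)]
    simp
  have hPe : ∀ w, P.eval w = ∏ j, (w - z j) := by
    intro w; simp [hPdef, eval_prod]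
  have hcoeff : ∀ i, ‖P.coeff i‖ ≤ n.choose i := by
    intro i
    have := coeff_le_of_roots_le (f := RingHom.id ℂ) (B := 1) i hPm
      (IsAlgClosed.splits _) (by
        intro y hy
        rw [Polynomial.map_id, mem_roots hPm.ne_zero, IsRoot, hPe, Finset.prod_eq_zero_iff] at hy
        obtain ⟨j, _, hj⟩ := hy
        rw [sub_eq_zero.1 hj]
        exact hz j)
    simpa [hPd] using this
  -- the bound on the circle
  have hbound : ∀ w ∈ Metric.sphere (0 : ℂ) r,
      ‖∑ j, z j ^ K / (w ^ K * (w - z j))‖ ≤ 100 / 98 * (16 / 25) ^ n := by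
    intro w hw
    have hwr : ‖w‖ = r := by simpa using hw
    have hlow : (1 / 8 : ℝ) ^ n ≤ ‖P.eval w‖ := by
      refine hprod.trans ?_
      rw [hPe, norm_prod]
      refine Finset.prod_le_prod (fun _ _ => abs_nonneg _) (fun j _ => ?_)
      rw [← hwr]
      exact abs_norm_sub_norm_le _ _
    have hPw : P.eval w ≠ 0 := by
      rw [hPe]; exact Finset.prod_ne_zero_iff.2 (fun j _ => hwne w hw j)
    have e : ∑ j, z j ^ K / (w ^ K * (w - z j)) = (w ^ K)⁻¹ * ∑ j, z j ^ K / (w - z j) := by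
      rw [Finset.mul_sum]
      refine Finset.sum_congr rfl (fun j _ => ?_)
      have a := hwne w hw j
      have b := hw0 w hw
      field_simp
    rw [e, turan_aux_identity n z K P hPd (fun j => by
      rw [hPe]; exact Finset.prod_eq_zero (Finset.mem_univ j) (by simp)) w (hwne w hw) hPw]
    have hin : ∀ i ∈ Finset.range (n + 1),
        ‖P.coeff i * ∑ l ∈ Finset.range i, w ^ l * ∑ j, z j ^ (K + (i - 1 - l))‖ ≤
          n.choose i * ((1 / 50 : ℝ) ^ K * (50 / 49)) := by
      intro i hi
      have hi := Finset.mem_range.1 hi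
      rw [norm_mul]
      refine mul_le_mul (hcoeff i) ?_ (norm_nonneg _) (by positivity)
      calc ‖∑ l ∈ Finset.range i, w ^ l * ∑ j, z j ^ (K + (i - 1 - l))‖
          ≤ ∑ l ∈ Finset.range i, (1 / 50 : ℝ) ^ K * (1 / 50) ^ (i - 1 - l) := by
            refine norm_sum_le_of_le _ (fun l hl => ?_)
            have hl := Finset.mem_range.1 hl
            rw [norm_mul, norm_pow, hwr, ← pow_add]
            have h1 := hcon (K + (i - 1 - l)) (by omega) (by omega)
            calc r ^ l * ‖∑ j, z j ^ (K + (i - 1 - l))‖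
                ≤ 1 * (1 / 50) ^ (K + (i - 1 - l)) :=
                  mul_le_mul (pow_le_one₀ hr.le hr2) h1.le (norm_nonneg _) zero_le_one
              _ = _ := one_mul _
        _ = (1 / 50 : ℝ) ^ K * ∑ l ∈ Finset.range i, (1 / 50) ^ l := by
            rw [← Finset.mul_sum, Finset.sum_range_reflect (fun l => (1 / 50 : ℝ) ^ l) i]
        _ ≤ _ := by
            have h5 : ∑ l ∈ Finset.range i, (1 / 50 : ℝ) ^ l ≤ 50 / 49 := by
              rw [geom_sum_eq (by norm_num)]
              have : (0 : ℝ) < (1 / 50) ^ i := by positivity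
              rw [div_le_iff_of_neg (by norm_num)]
              linarith
            exact mul_le_mul_of_nonneg_left h5 (by positivity)
    have hN := norm_sum_le_of_le _ hin
    rw [← Finset.sum_mul] at hN
    have hch : ∑ i ∈ Finset.range (n + 1), (n.choose i : ℝ) = 2 ^ n := by
      exact_mod_cast Nat.sum_range_choose n
    rw [hch] at hN
    rw [norm_mul, norm_div, norm_inv, norm_pow, hwr]
    have hrK : (r ^ K)⁻¹ ≤ 2 ^ K := by
      rw [← inv_pow]
      refine pow_le_pow_left₀ (by positivity) ?_ K
      rw [inv_le_comm₀ hr (by norm_num)]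
      linarith
    calc _ ≤ 2 ^ K * (2 ^ n * ((1 / 50 : ℝ) ^ K * (50 / 49)) / (1 / 8) ^ n) := by
            gcongr
      _ = 50 / 49 * ((1 / 25) ^ K * 16 ^ n) := by
            rw [show (1 / 25 : ℝ) = 2 * (1 / 50) by norm_num, mul_pow,
              show (16 : ℝ) = 2 * 8 by norm_num, mul_pow, div_pow 1 (8 : ℝ) n, one_pow]
            field_simp
      _ ≤ 50 / 49 * ((1 / 25) ^ n * 16 ^ n) := by
            have : (1 / 25 : ℝ) ^ K ≤ (1 / 25) ^ n :=
              pow_le_pow_of_le_one (by norm_num) (by norm_num) hK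
            gcongr
      _ = _ := by rw [← mul_pow]; norm_num
  have hup := circleIntegral.norm_integral_le_of_norm_le_const hr.le hbound
  have hcircle : ∀ j ∈ (Finset.univ : Finset (Fin n)),
      CircleIntegrable (fun w => z j ^ K / (w ^ K * (w - z j))) 0 r := by
    intro j _
    refine ContinuousOn.circleIntegrable hr.le (ContinuousOn.div (by fun_prop) (by fun_prop) ?_)
    intro w hw
    exact mul_ne_zero (pow_ne_zero _ (hw0 w hw)) (hwne w hw j)
  rw [circleIntegral.integral_fun_sum hcircle,
    Finset.sum_congr rfl (fun j _ => turan_aux_integral (z j) r hr (hne j) K (by omega)),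
    ← Finset.sum_filter, Finset.sum_const, nsmul_eq_mul, norm_mul, norm_neg] at hup
  have hcard : (1 : ℝ) ≤ ‖((Finset.univ.filter (fun j => r < ‖z j‖)).card : ℂ)‖ := by
    rw [Complex.norm_natCast]
    have : 0 < (Finset.univ.filter (fun j => r < ‖z j‖)).card := by
      refine Finset.card_pos.2 ⟨j₀, ?_⟩
      simp only [Finset.mem_filter, Finset.mem_univ, true_and]
      have := hne j₀
      rw [hj₀] at this ⊢
      exact lt_of_le_of_ne hr2 (Ne.symm this)
    exact_mod_cast this
  have hpi : ‖(2 * π * I : ℂ)‖ = 2 * π := by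
    simp [abs_of_pos Real.pi_pos]
  rw [hpi] at hup
  have h16 : (16 / 25 : ℝ) ^ n ≤ 16 / 25 :=
    pow_le_of_le_one (by norm_num) (by norm_num) (by omega)
  have hpp := Real.pi_pos
  have c1 : 2 * π * 1 ≤ 2 * π * (r * (100 / 98 * (16 / 25) ^ n)) := by
    nlinarith
  have c2 := le_of_mul_le_mul_left c1 (by positivity)
  have c3 : r * (100 / 98 * (16 / 25 : ℝ) ^ n) ≤ 1 * (100 / 98 * (16 / 25)) := by gcongr
  norm_num at c3
  linarith

/-- **Turán's power sum inequality.** Let `ν ≥ 1` and `z₁, …, z_ν ∈ ℂ`. If `K` is an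
integer with `K ≥ ν`, then there is an integer `k ∈ [K, 2K]` such that
`|z₁^k + ⋯ + z_ν^k| ≥ (|z₁|/50)^k`. -/
theorem turan_power_sum (ν : ℕ) (hν : 1 ≤ ν) (z : Fin ν → ℂ) (K : ℕ) (hK : ν ≤ K) :
    ∃ k : ℕ, K ≤ k ∧ k ≤ 2 * K ∧
      (‖z ⟨0, hν⟩‖ / 50) ^ k ≤ ‖∑ j : Fin ν, z j ^ k‖ := by
  have : Nonempty (Fin ν) := ⟨⟨0, hν⟩⟩
  obtain ⟨j₀, hj₀⟩ := Finite.exists_max (fun j => ‖z j‖)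
  rcases (norm_nonneg (z j₀)).eq_or_lt with h0 | hpos
  · refine ⟨K, le_rfl, by omega, ?_⟩
    have : ‖z ⟨0, hν⟩‖ = 0 := le_antisymm (h0 ▸ hj₀ _) (norm_nonneg _)
    rw [this, zero_div, zero_pow (by omega)]
    exact norm_nonneg _
  · have hne : (‖z j₀‖ : ℂ) ≠ 0 := by exact_mod_cast hpos.ne'
    obtain ⟨k, h1, h2, h3⟩ := turan_aux_normalized ν hν (fun j => z j / (‖z j₀‖ : ℂ)) K hK
      (fun j => by
        rw [norm_div, Complex.norm_real, norm_norm]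
        exact (div_le_one hpos).2 (hj₀ j)) j₀
      (by
        rw [norm_div, Complex.norm_real, norm_norm]
        exact div_self hpos.ne')
    refine ⟨k, h1, h2, ?_⟩
    simp only [div_pow, ← Finset.sum_div] at h3
    rw [norm_div, norm_pow, Complex.norm_real, norm_norm, le_div_iff₀ (by positivity)] at h3
    calc (‖z ⟨0, hν⟩‖ / 50) ^ k ≤ (‖z j₀‖ / 50) ^ k := by
          gcongr
          exact hj₀ _
      _ = 1 ^ k / 50 ^ k * ‖z j₀‖ ^ k := by rw [div_pow]; ring
      _ ≤ _ := h3
end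

section
/- (Gallagher's lemma.) There is an absolute constant C > 0 such that for every T ≥ 1 and every finitely supported sequence of complex numbers (a_n)_{n≥1}, one has ∫_{−T}^{T} |Σ_{n≥1} a_n n^{−it}|² dt ≤ C·T²·∫_0^∞ |Σ_{w < n ≤ w·e^{1/T}} a_n|² dw/w. -/
open Complex MeasureTheory

lemma gal_gauss (b : ℝ) (hb : 0 < b) (z : ℝ) :
    ∫ t : ℝ, cexp (-(I * t * z)) * (Real.exp (-b * t ^ 2) : ℂ) =
      ((√(Real.pi / b) * Real.exp (-(1 / (4 * b)) * z ^ 2) : ℝ) : ℂ) := by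
  have h := fourierIntegral_gaussian (b := (b : ℂ)) (by simpa using hb) (-(z : ℂ))
  rw [Real.sqrt_eq_rpow]
  push_cast
  rw [Complex.ofReal_cpow (by positivity)]
  push_cast
  convert h using 2
  · ext t
    congr 2
    ring
  · congr 1
    rw [neg_sq]
    ring_nf

lemma gal_plancherel (b : ℝ) (hb : 0 < b) (f : ℝ → ℂ) (hf : Integrable f)
    (hf2 : Integrable (fun x => ‖f x‖ ^ 2)) :
    Integrable (fun t : ℝ => ‖∫ y : ℝ, f y * cexp (-(I * t * y))‖ ^ 2 * Real.exp (-b * t ^ 2)) ∧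
    ∫ t : ℝ, ‖∫ y : ℝ, f y * cexp (-(I * t * y))‖ ^ 2 * Real.exp (-b * t ^ 2) ≤
      2 * Real.pi * ∫ y : ℝ, ‖f y‖ ^ 2 := by
  set F : ℝ → ℂ := fun t => ∫ y : ℝ, f y * cexp (-(I * t * y)) with hF
  set E : ℝ → ℝ × ℝ → ℂ := fun t p =>
    f p.1 * (starRingEnd ℂ) (f p.2) *
      (cexp (-(I * t * (p.1 - p.2 : ℝ))) * (Real.exp (-b * t ^ 2) : ℂ)) with hE
  set K : ℝ → ℝ := fun z => √(Real.pi / b) * Real.exp (-(1 / (4 * b)) * z ^ 2) with hK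
  have hfc : Integrable (fun x => (starRingEnd ℂ) (f x)) :=
    (Complex.conjLIE.integrable_comp_iff (φ := f)).2 hf
  have hg : Integrable (fun t : ℝ => (Real.exp (-b * t ^ 2) : ℂ)) :=
    (integrable_exp_neg_mul_sq hb).ofReal
  have hEint : Integrable (Function.uncurry E) (volume.prod (volume.prod volume)) := by
    have h1 := hg.mul_prod (hf.mul_prod hfc)
    have h2 := h1.bdd_mul (c := 1)
      (f := fun q : ℝ × ℝ × ℝ => cexp (-(I * q.1 * (q.2.1 - q.2.2 : ℝ))))
      (by apply Continuous.aestronglyMeasurable; fun_prop)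
      (by
        refine Filter.Eventually.of_forall fun q => ?_
        rw [show -(I * q.1 * (q.2.1 - q.2.2 : ℝ)) = ((-(q.1 * (q.2.1 - q.2.2)) : ℝ) : ℂ) * I by
          push_cast; ring]
        rw [Complex.norm_exp_ofReal_mul_I])
    refine h2.congr (Filter.Eventually.of_forall fun q => ?_)
    simp only [hE, Function.uncurry]
    ring
  have hin : ∀ t, ∫ p, E t p ∂(volume.prod volume) =
      ((‖F t‖ ^ 2 * Real.exp (-b * t ^ 2) : ℝ) : ℂ) := by
    intro t
    have h1 := integral_prod_mul (μ := volume) (ν := volume) (fun y : ℝ => f y * cexp (-(I * t * y)))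
      (fun y : ℝ => (starRingEnd ℂ) (f y * cexp (-(I * t * y))))
    rw [integral_conj, Complex.mul_conj'] at h1
    push_cast
    rw [hF]
    simp only
    rw [← h1, ← integral_mul_const]
    congr 1
    ext p
    simp only [hE, map_mul]
    rw [← Complex.exp_conj]
    simp only [map_neg, map_mul, conj_I, conj_ofReal]
    push_cast
    rw [show -(I * (t:ℂ) * ((p.1:ℂ) - p.2)) = -(I * t * p.1) + -(-I * t * p.2) by ring,
      Complex.exp_add]
    ring
  have hI : Integrable (fun t : ℝ => ‖F t‖ ^ 2 * Real.exp (-b * t ^ 2)) := by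
    have h1 := hEint.integral_prod_left
    simp only [Function.uncurry] at h1
    simp only [hin] at h1
    exact h1.re
  refine ⟨hI, ?_⟩
  have hKint : Integrable K := (integrable_exp_neg_mul_sq (by positivity)).const_mul _
  have hKval : ∫ z, K z = 2 * Real.pi := by
    rw [hK, integral_const_mul, integral_gaussian, ← Real.sqrt_mul (by positivity)]
    rw [show Real.pi / b * (Real.pi / (1 / (4 * b))) = (2 * Real.pi) ^ 2 by field_simp; ring]
    exact Real.sqrt_sq (by positivity)
  have hKeven : ∀ x y, K (x - y) = K (y - x) := by
    intro x y
    simp only [hK]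
    rw [show (x - y) ^ 2 = (y - x) ^ 2 by ring]
  have hi2 : Integrable (fun p : ℝ × ℝ => ‖f p.2‖ ^ 2 * K (p.1 - p.2)) (volume.prod volume) :=
    hf2.convolution_integrand (ContinuousLinearMap.mul ℝ ℝ) hKint
  have hi1 : Integrable (fun p : ℝ × ℝ => ‖f p.1‖ ^ 2 * K (p.1 - p.2)) (volume.prod volume) := by
    refine hi2.swap.congr (Filter.Eventually.of_forall fun p => ?_)
    simp [hKeven p.1 p.2]
  have hv2 : ∫ p : ℝ × ℝ, ‖f p.2‖ ^ 2 * K (p.1 - p.2) ∂(volume.prod volume) =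
      2 * Real.pi * ∫ y : ℝ, ‖f y‖ ^ 2 := by
    rw [integral_prod_symm _ hi2]
    simp only [integral_const_mul]
    simp only [integral_sub_right_eq_self K, hKval]
    rw [integral_mul_const, mul_comm]
  have hv1 : ∫ p : ℝ × ℝ, ‖f p.1‖ ^ 2 * K (p.1 - p.2) ∂(volume.prod volume) =
      2 * Real.pi * ∫ y : ℝ, ‖f y‖ ^ 2 := by
    rw [integral_prod _ hi1]
    simp only [integral_const_mul]
    simp only [integral_sub_left_eq_self K, hKval]
    rw [integral_mul_const, mul_comm]
  have hswap := integral_integral_swap hEint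
  simp only [hin] at hswap
  rw [integral_complex_ofReal] at hswap
  have hin2 : ∀ p : ℝ × ℝ, ∫ t, E t p = f p.1 * (starRingEnd ℂ) (f p.2) * (K (p.1 - p.2) : ℂ) := by
    intro p
    simp only [hE, integral_const_mul]
    rw [gal_gauss b hb]
  simp only [hin2] at hswap
  have hn : 0 ≤ ∫ t : ℝ, ‖F t‖ ^ 2 * Real.exp (-b * t ^ 2) :=
    integral_nonneg fun t => by positivity
  have hle := norm_integral_le_of_norm_le
    (f := fun p : ℝ × ℝ => f p.1 * (starRingEnd ℂ) (f p.2) * (K (p.1 - p.2) : ℂ))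
    ((hi1.add hi2).const_mul (1 / 2)) (Filter.Eventually.of_forall fun p => by
      have hk : 0 ≤ K (p.1 - p.2) := by simp only [hK]; positivity
      simp only [norm_mul, RCLike.norm_conj, Complex.norm_real, Real.norm_eq_abs, abs_of_nonneg hk,
        Pi.add_apply]
      nlinarith [mul_nonneg hk (sq_nonneg (‖f p.1‖ - ‖f p.2‖))])
  rw [← hswap, Complex.norm_real, Real.norm_eq_abs, abs_of_nonneg hn, integral_const_mul] at hle
  simp only [Pi.add_apply] at hle
  rw [integral_add hi1 hi2, hv1, hv2] at hle
  linarith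

lemma gal_kernel (T : ℝ) (hT : 1 ≤ T) (t : ℝ) (ht : |t| ≤ T) :
    1 ≤ 2 * T * ‖∫ u in (-(1 / T))..0, cexp (-(I * t * u))‖ := by
  have hT0 : 0 < T := by linarith
  have h1 : (∫ u in (-(1 / T))..0, cexp (-(I * t * u))).re
      = ∫ u in (-(1 / T))..0, Real.cos (t * u) := by
    have hc : IntervalIntegrable (fun u : ℝ => cexp (-(I * t * u))) volume (-(1 / T)) 0 :=
      Continuous.intervalIntegrable (by fun_prop) _ _
    have := Complex.reCLM.intervalIntegral_comp_comm hc
    rw [← Complex.reCLM_apply, ← this]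
    congr 1
    ext u
    rw [show -(I * (t:ℂ) * u) = ((-(t * u) : ℝ) : ℂ) * I by push_cast; ring]
    rw [Complex.reCLM_apply, Complex.exp_ofReal_mul_I_re, Real.cos_neg]
  have h2 : ∫ u in (-(1 / T))..0, (1 / 2 : ℝ) ≤ ∫ u in (-(1 / T))..0, Real.cos (t * u) := by
    apply intervalIntegral.integral_mono_on
    · have : 0 < 1 / T := by positivity
      linarith
    · simp
    · exact Continuous.intervalIntegrable (by fun_prop) _ _
    · intro u hu
      have hu1 : |u| ≤ 1 / T := by rw [abs_le]; exact ⟨hu.1, hu.2.trans (by positivity)⟩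
      have h3 : |t * u| ≤ 1 := by
        rw [abs_mul]
        calc |t| * |u| ≤ T * (1 / T) := by gcongr
          _ = 1 := by field_simp
      have h4 : (t * u) ^ 2 ≤ 1 := by
        rw [← sq_abs]; nlinarith [abs_nonneg (t * u)]
      have := Real.one_sub_sq_div_two_le_cos (x := t * u)
      linarith
  rw [← h1] at h2
  have h3 := h2.trans (Complex.re_le_norm _)
  simp only [intervalIntegral.integral_const, smul_eq_mul] at h3
  calc (1 : ℝ) = 2 * T * ((0 - -(1 / T)) * (1 / 2)) := by field_simp; ring
    _ ≤ _ := by gcongr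

lemma gal_final (T : ℝ) (hT : 1 ≤ T) (a : ℕ → ℂ) (h0 : a 0 = 0)
      (hfin : Set.Finite {n : ℕ | a n ≠ 0}) :
      (∫ t in (-T)..T, ‖∑' n : ℕ, a n * (n : ℂ) ^ (-(Complex.I * t))‖ ^ 2) ≤
        8 * Real.pi * Real.exp 1 * T ^ 2 * ∫ w in Set.Ioi (0 : ℝ),
          ‖∑ n ∈ Finset.Ioc ⌊w⌋₊ ⌊w * Real.exp (1 / T)⌋₊, a n‖ ^ 2 / w := by
  have hT0 : 0 < T := by linarith
  have hd : 0 < 1 / T := by positivity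
  set s := hfin.toFinset with hs
  have hpos : ∀ n ∈ s, (0 : ℝ) < n := by
    intro n hn
    have : n ≠ 0 := by rintro rfl; simp [hs, h0] at hn
    positivity
  set f : ℝ → ℂ := fun y => ∑ n ∈ s,
    Set.indicator (Set.Ico (Real.log n - 1 / T) (Real.log n)) (fun _ => a n) y with hfdef
  have hmem : ∀ p : ENNReal, MemLp f p volume := fun p =>
    memLp_finsetSum s fun n _ => memLp_indicator_const p measurableSet_Ico _ (Or.inr (by simp))
  have hf : Integrable f := memLp_one_iff_integrable.1 (hmem 1)
  have hf2 : Integrable (fun x => ‖f x‖ ^ 2) :=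
    (memLp_two_iff_integrable_sq_norm hf.1).1 (hmem 2)
  -- right-hand side
  have hR : ∫ w in Set.Ioi (0 : ℝ),
      ‖∑ n ∈ Finset.Ioc ⌊w⌋₊ ⌊w * Real.exp (1 / T)⌋₊, a n‖ ^ 2 / w = ∫ y, ‖f y‖ ^ 2 := by
    have h := integral_image_eq_integral_abs_deriv_smul (s := Set.univ) (f := Real.exp)
      (f' := Real.exp) MeasurableSet.univ (fun x _ => (Real.hasDerivAt_exp x).hasDerivWithinAt)
      Real.exp_injective.injOn
      (fun w => ‖∑ n ∈ Finset.Ioc ⌊w⌋₊ ⌊w * Real.exp (1 / T)⌋₊, a n‖ ^ 2 / w)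
    rw [Set.image_univ, Real.range_exp, setIntegral_univ] at h
    rw [h]
    congr 1
    ext y
    have hfy : ∑ n ∈ Finset.Ioc ⌊Real.exp y⌋₊ ⌊Real.exp y * Real.exp (1 / T)⌋₊, a n = f y := by
      simp only [hfdef, Set.indicator_apply]
      rw [← Finset.sum_filter]
      symm
      apply Finset.sum_subset_zero_on_sdiff
      · intro n hn
        rw [Finset.mem_filter] at hn
        have hp := hpos n hn.1
        rw [Finset.mem_Ioc, Nat.floor_lt (by positivity), Nat.le_floor_iff (by positivity),
          ← Real.exp_add, ← Real.lt_log_iff_exp_lt hp, ← Real.log_le_iff_le_exp hp]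
        exact ⟨hn.2.2, by linarith [hn.2.1]⟩
      · intro n hn
        rw [Finset.mem_sdiff, Finset.mem_filter] at hn
        by_contra hne
        apply hn.2
        have hns : n ∈ s := by simpa [hs] using hne
        have hp := hpos n hns
        have h1 := hn.1
        rw [Finset.mem_Ioc, Nat.floor_lt (by positivity), Nat.le_floor_iff (by positivity),
          ← Real.exp_add, ← Real.lt_log_iff_exp_lt hp, ← Real.log_le_iff_le_exp hp] at h1
        exact ⟨hns, by linarith [h1.2], h1.1⟩
      · intros; rfl
    rw [hfy, abs_of_pos (Real.exp_pos y), smul_eq_mul]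
    field_simp
  rw [hR]
  set S : ℝ → ℂ := fun t => ∑ n ∈ s, a n * cexp (-(I * t * Real.log n)) with hSdef
  have hS : ∀ t : ℝ, ∑' n : ℕ, a n * (n : ℂ) ^ (-(Complex.I * t)) = S t := by
    intro t
    rw [tsum_eq_sum (s := s)]
    · refine Finset.sum_congr rfl fun n hn => ?_
      have hp := hpos n hn
      have hn0 : (n : ℂ) ≠ 0 := by exact_mod_cast hp.ne'
      rw [Complex.cpow_def_of_ne_zero hn0, ← Complex.natCast_log]
      congr 2
      ring
    · intro n hn
      have : a n = 0 := by simpa [hs] using hn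
      simp [this]
  simp only [hS]
  have hFS : ∀ t : ℝ, ∫ y : ℝ, f y * cexp (-(I * t * y)) =
      S t * ∫ u in (-(1 / T))..0, cexp (-(I * t * u)) := by
    intro t
    have hterm : ∀ n : ℕ, (fun y : ℝ => Set.indicator (Set.Ico (Real.log n - 1 / T) (Real.log n))
        (fun _ => a n) y * cexp (-(I * t * y))) =
        Set.indicator (Set.Ico (Real.log n - 1 / T) (Real.log n))
          (fun y : ℝ => a n * cexp (-(I * t * y))) := by
      intro n
      ext y
      simp only [Set.indicator_apply]
      split_ifs <;> simp
    simp only [hfdef, Finset.sum_mul]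
    rw [integral_finsetSum]
    · simp only [hSdef, Finset.sum_mul]
      refine Finset.sum_congr rfl fun n _ => ?_
      rw [hterm, integral_indicator measurableSet_Ico, integral_Ico_eq_integral_Ioc,
        ← intervalIntegral.integral_of_le (by linarith), intervalIntegral.integral_const_mul,
        mul_assoc]
      congr 1
      have h := intervalIntegral.integral_comp_add_right (a := -(1 / T)) (b := 0)
        (fun y : ℝ => cexp (-(I * t * y))) (Real.log n)
      rw [show -(1 / T) + Real.log n = Real.log n - 1 / T by ring, zero_add] at h
      rw [← h, ← intervalIntegral.integral_const_mul]
      congr 1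
      ext u
      rw [← Complex.exp_add]
      push_cast
      congr 1
      ring
    · intro n _
      rw [hterm, integrable_indicator_iff measurableSet_Ico]
      exact (Continuous.integrableOn_Icc (by fun_prop)).mono_set Set.Ico_subset_Icc_self
  obtain ⟨hI, hle⟩ := gal_plancherel (1 / T ^ 2) (by positivity) f hf hf2
  set G : ℝ → ℝ := fun t => ‖∫ y : ℝ, f y * cexp (-(I * t * y))‖ ^ 2 *
    Real.exp (-(1 / T ^ 2) * t ^ 2) with hG
  have hpt : ∀ t ∈ Set.Icc (-T) T, ‖S t‖ ^ 2 ≤ 4 * Real.exp 1 * T ^ 2 * G t := by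
    intro t ht
    have ht' : |t| ≤ T := abs_le.2 ht
    have hk := gal_kernel T hT t ht'
    set k := ‖∫ u in (-(1 / T))..0, cexp (-(I * t * u))‖ with hkd
    have he : 1 ≤ Real.exp 1 * Real.exp (-(1 / T ^ 2) * t ^ 2) := by
      rw [← Real.exp_add]
      apply Real.one_le_exp
      have : t ^ 2 ≤ T ^ 2 := sq_le_sq' ht.1 ht.2
      have h5 : 1 / T ^ 2 * t ^ 2 ≤ 1 := by
        rw [one_div_mul_eq_div]; exact (div_le_one (by positivity)).2 this
      linarith
    simp only [hG]
    rw [hFS, norm_mul, ← hkd]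
    calc ‖S t‖ ^ 2 = ‖S t‖ ^ 2 * (1 ^ 2 * 1) := by ring
      _ ≤ ‖S t‖ ^ 2 * ((2 * T * k) ^ 2 *
          (Real.exp 1 * Real.exp (-(1 / T ^ 2) * t ^ 2))) := by gcongr
      _ = _ := by ring
  have hGnn : ∀ t, 0 ≤ G t := fun t => by simp only [hG]; positivity
  calc ∫ t in (-T)..T, ‖S t‖ ^ 2 ≤ ∫ t in (-T)..T, 4 * Real.exp 1 * T ^ 2 * G t := by
        apply intervalIntegral.integral_mono_on (by linarith)
        · exact Continuous.intervalIntegrable (by fun_prop) _ _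
        · exact (hI.const_mul _).intervalIntegrable
        · exact hpt
    _ = 4 * Real.exp 1 * T ^ 2 * ∫ t in (-T)..T, G t := intervalIntegral.integral_const_mul _ _
    _ ≤ 4 * Real.exp 1 * T ^ 2 * ∫ t, G t := by
        gcongr
        rw [intervalIntegral.integral_of_le (by linarith)]
        exact setIntegral_le_integral hI (Filter.Eventually.of_forall hGnn)
    _ ≤ 4 * Real.exp 1 * T ^ 2 * (2 * Real.pi * ∫ y : ℝ, ‖f y‖ ^ 2) := by gcongr
    _ = _ := by ring

/-- **Gallagher's lemma.** There is an absolute constant `C > 0` such that for every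
`T ≥ 1` and every finitely supported sequence `(a_n)_{n≥1}` of complex numbers,
`∫_{−T}^{T} |∑_n a_n n^{−it}|² dt ≤ C T² ∫_0^∞ |∑_{w < n ≤ w e^{1/T}} a_n|² dw/w`. -/
theorem gallagher_lemma :
    ∃ C : ℝ, 0 < C ∧ ∀ (T : ℝ), 1 ≤ T → ∀ a : ℕ → ℂ, a 0 = 0 →
      (Set.Finite {n : ℕ | a n ≠ 0}) →
      (∫ t in (-T)..T, ‖∑' n : ℕ, a n * (n : ℂ) ^ (-(Complex.I * t))‖ ^ 2) ≤
        C * T ^ 2 * ∫ w in Set.Ioi (0 : ℝ),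
          ‖∑ n ∈ Finset.Ioc ⌊w⌋₊ ⌊w * Real.exp (1 / T)⌋₊, a n‖ ^ 2 / w := by
  exact ⟨8 * Real.pi * Real.exp 1, by positivity, gal_final⟩
end
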